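/- Let -1 < α < -1/2 ≤ β. Then for all t > 0 and θ, φ ∈ [0,π], 𝓗_t^{α,β}(θ,φ) = ∫_{[-1,1]} ∫_{(-1,1)} (−∂_u Ψ^{α,β}(t,θ,φ,u,v)) Π_α(u) du dΠ_β(v) + ∫_{[-1,1]} ∫_{[-1,1]} Ψ^{α,β}(t,θ,φ,u,v) dΠ_{-1/2}(u) dΠ_β(v). -/

import Mathlib

open MeasureTheory Real Set
open scoped ENNReal Classical

noncomputable def cab (α β : ℝ) : ℝ :=
  Real.Gamma (α + β + 2) / (2 ^ (α + β + 1) * Real.Gamma (α + 1) * Real.Gamma (β + 1))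

noncomputable def F4 (a₁ a₂ b₁ b₂ x y : ℝ) : ℝ :=
  ∑' p : ℕ × ℕ,
    (Polynomial.eval a₁ (ascPochhammer ℝ (p.1 + p.2)) *
      Polynomial.eval a₂ (ascPochhammer ℝ (p.1 + p.2))) /
    (Polynomial.eval b₁ (ascPochhammer ℝ p.1) * Polynomial.eval b₂ (ascPochhammer ℝ p.2) *
      (Nat.factorial p.1) * (Nat.factorial p.2)) * x ^ p.1 * y ^ p.2

noncomputable def Hker (α β t θ φ : ℝ) : ℝ :=
  cab α β * Real.sinh (t / 2) / Real.cosh (t / 2) ^ (α + β + 2) *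
    F4 ((α + β + 2) / 2) ((α + β + 3) / 2) (α + 1) (β + 1)
      ((Real.sin (θ / 2) * Real.sin (φ / 2) / Real.cosh (t / 2)) ^ 2)
      ((Real.cos (θ / 2) * Real.cos (φ / 2) / Real.cosh (t / 2)) ^ 2)

noncomputable def qf (θ φ u v : ℝ) : ℝ :=
  1 - u * Real.sin (θ / 2) * Real.sin (φ / 2) - v * Real.cos (θ / 2) * Real.cos (φ / 2)

noncomputable def Psi (α β t θ φ u v : ℝ) : ℝ :=
  cab α β * Real.sinh (t / 2) / (Real.cosh (t / 2) - 1 + qf θ φ u v) ^ (α + β + 2)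

noncomputable def PsiE (α β t θ φ u v : ℝ) : ℝ :=
  (Psi α β t θ φ u v + Psi α β t θ φ (-u) v + Psi α β t θ φ u (-v) +
    Psi α β t θ φ (-u) (-v)) / 4

noncomputable def PiMeas (ν : ℝ) : Measure ℝ :=
  if ν = -(1/2) then (2⁻¹ : ℝ≥0∞) • (Measure.dirac (-1) + Measure.dirac 1)
  else (volume.restrict (Icc (-1 : ℝ) 1)).withDensity
    (fun u => ENNReal.ofReal
      (Real.Gamma (ν + 1) / (Real.sqrt π * Real.Gamma (ν + 1/2)) * (1 - u ^ 2) ^ (ν - 1/2)))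

noncomputable def PiFun (γ u : ℝ) : ℝ :=
  Real.Gamma (γ + 1) / (Real.sqrt π * Real.Gamma (γ + 1/2)) *
    ∫ w in (0 : ℝ)..u, (1 - w ^ 2) ^ (γ - 1/2)

noncomputable def PiInt (ν : ℝ) (S : Set ℝ) (f : ℝ → ℝ) : ℝ :=
  if ν = -(1/2) then
    ((if (-1 : ℝ) ∈ S then f (-1) else 0) + (if (1 : ℝ) ∈ S then f 1 else 0)) / 2
  else ∫ u in S, f u *
    (Real.Gamma (ν + 1) / (Real.sqrt π * Real.Gamma (ν + 1/2)) * (1 - u ^ 2) ^ (ν - 1/2))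

noncomputable def muab (α β : ℝ) : Measure ℝ :=
  (volume.restrict (Icc (0 : ℝ) π)).withDensity
    (fun θ => ENNReal.ofReal (Real.sin (θ / 2) ^ (2 * α + 1) * Real.cos (θ / 2) ^ (2 * β + 1)))

def ballI (θ r : ℝ) : Set ℝ := Ioo (θ - r) (θ + r) ∩ Icc 0 π

/-!
For `-1 < α < -1 / 2` the ultraspherical weight is not integrable, and `Π_α` is replaced by the
functional `L f = ∫ f dΠ_{-1/2} - ∫ f' Π_α`, which for `α > -1 / 2` is just `∫ f dΠ_α` after an
integration by parts. Differentiating `u (1 - u²) ^ (α + 1/2)` gives a recursion from `Π_{α+1}` to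
`Π_α`, which turns `L` into `L f = ∫ (f + u f' / (2α + 2)) dΠ_{α+1}`. Hence `L` has the moments
`L (u ^ (2k)) = (1/2)_k / (α+1)_k`, the analytic continuation of those of `dΠ_α`, and its odd
moments vanish. Pulling `cosh (t / 2)` out of the denominator makes `Ψ` a multiple of a binomial
power `(1 - u z - v w) ^ (-s)`, whose double power series in `u` and `v` converges absolutely on
`[-1, 1]²`. Integrating it termwise against `L` in `u` and `dΠ_β` in `v` kills the terms of odd
degree in `u` or in `v`, and the duplication formula for Pochhammer symbols turns the remaining
ones into `F₄`.
-/

section SetIntegral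

lemma integral_Ioo_neg_self_comp_abs (f : ℝ → ℝ) (r : ℝ) :
    ∫ u in Ioo (-r) r, f |u| = 2 * ∫ u in Ioo 0 r, f u := by
  have h := integral_comp_abs (f := (Iio r).indicator f)
  rw [setIntegral_indicator measurableSet_Iio, Ioi_inter_Iio] at h
  rw [← h, ← integral_indicator measurableSet_Ioo]
  congr 1 with u
  simp only [indicator, mem_Ioo, mem_Iio, abs_lt]

lemma integral_Ioo_neg_self_of_odd {f : ℝ → ℝ} (hf : Function.Odd f) (r : ℝ) :
    ∫ u in Ioo (-r) r, f u = 0 := by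
  have h := integral_neg_eq_self ((Ioo (-r) r).indicator f) volume
  have hodd (u : ℝ) : (Ioo (-r) r).indicator f (-u) = -(Ioo (-r) r).indicator f u := by
    by_cases hu : u ∈ Ioo (-r) r
    · have hu' : -u ∈ Ioo (-r) r := ⟨by linarith [hu.2], by linarith [hu.1]⟩
      rw [indicator_of_mem hu, indicator_of_mem hu', hf u]
    · have hu' : -u ∉ Ioo (-r) r := fun h => hu ⟨by linarith [h.2], by linarith [h.1]⟩
      rw [indicator_of_notMem hu, indicator_of_notMem hu', neg_zero]
  simp only [hodd, integral_neg, integral_indicator measurableSet_Ioo] at h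
  linarith

lemma integral_Ioo_zero_one_comp_sq (g : ℝ → ℝ) :
    ∫ u in Ioo (0 : ℝ) 1, 2 * u * g (u ^ 2) = ∫ x in Ioo (0 : ℝ) 1, g x := by
  have himage : (fun u : ℝ => u ^ 2) '' Ioo 0 1 = Ioo 0 1 := by
    ext x
    constructor
    · rintro ⟨u, ⟨hu₀, hu₁⟩, rfl⟩
      exact ⟨by positivity, pow_lt_one₀ hu₀.le hu₁ two_ne_zero⟩
    · exact fun ⟨hx₀, hx₁⟩ =>
        ⟨√x, ⟨sqrt_pos.2 hx₀, by rwa [sqrt_lt' one_pos, one_pow]⟩, sq_sqrt hx₀.le⟩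
  have hinj : InjOn (fun u : ℝ => u ^ 2) (Ioo 0 1) := fun u hu v hv =>
    (pow_left_inj₀ hu.1.le hv.1.le two_ne_zero).1
  have h := integral_image_eq_integral_abs_deriv_smul measurableSet_Ioo
    (fun u _ => (hasDerivAt_pow 2 u).hasDerivWithinAt) hinj g
  rw [himage] at h
  rw [h]
  refine setIntegral_congr_fun measurableSet_Ioo fun u hu => ?_
  simp [abs_of_pos hu.1]

lemma integral_rpow_mul_one_sub_rpow {a b : ℝ} (ha : 0 < a) (hb : 0 < b) :
    ∫ x in Ioo (0 : ℝ) 1, x ^ (a - 1) * (1 - x) ^ (b - 1) = ProbabilityTheory.beta a b := by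
  have hβ := ProbabilityTheory.beta_pos ha hb
  have hmass : ∫ x in Ioo (0 : ℝ) 1,
      1 / ProbabilityTheory.beta a b * x ^ (a - 1) * (1 - x) ^ (b - 1) = 1 := by
    rw [integral_eq_lintegral_of_nonneg_ae ?_ (by fun_prop), ← ProbabilityTheory.lintegral_betaPDF,
      ProbabilityTheory.lintegral_betaPDF_eq_one ha hb, ENNReal.toReal_one]
    refine ae_restrict_of_forall_mem measurableSet_Ioo fun x ⟨hx₀, hx₁⟩ => ?_
    have := sub_pos.2 hx₁
    simp only [Pi.zero_apply]
    positivity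
  simp only [mul_assoc, integral_const_mul] at hmass
  field_simp at hmass
  exact hmass

end SetIntegral

section Pochhammer

lemma ascPochhammer_eval_two_mul (s : ℝ) (n : ℕ) :
    (ascPochhammer ℝ (2 * n)).eval s =
      4 ^ n * (ascPochhammer ℝ n).eval (s / 2) * (ascPochhammer ℝ n).eval ((s + 1) / 2) := by
  induction n with
  | zero => simp
  | succ n ih =>
    rw [show 2 * (n + 1) = 2 * n + 1 + 1 by ring]
    simp only [ascPochhammer_succ_eval, ih]
    push_cast
    ring

lemma cast_factorial_two_mul (n : ℕ) :
    ((2 * n).factorial : ℝ) = 4 ^ n * n.factorial * (ascPochhammer ℝ n).eval (1 / 2) := by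
  have h := ascPochhammer_eval_two_mul 1 n
  rw [show ((1 : ℝ) + 1) / 2 = 1 by norm_num, ascPochhammer_eval_one, ascPochhammer_eval_one] at h
  rw [h]
  ring

lemma ascPochhammer_succ_eval_left (s : ℝ) (n : ℕ) :
    (ascPochhammer ℝ (n + 1)).eval s = s * (ascPochhammer ℝ n).eval (s + 1) := by
  simp [ascPochhammer_succ_left, Polynomial.eval_comp]

lemma Gamma_add_nat_eq_ascPochhammer_mul {x : ℝ} (hx : 0 < x) (n : ℕ) :
    Gamma (x + n) = (ascPochhammer ℝ n).eval x * Gamma x := by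
  induction n with
  | zero => simp
  | succ n ih =>
    rw [Nat.cast_succ, ← add_assoc, Gamma_add_one (by positivity), ih, ascPochhammer_succ_eval]
    ring

end Pochhammer

section BinomialSeries

lemma hasSum_one_sub_rpow_neg (s : ℝ) {x : ℝ} (hx : |x| < 1) :
    HasSum (fun n : ℕ => (ascPochhammer ℝ n).eval s / n.factorial * x ^ n) ((1 - x) ^ (-s)) := by
  have h := (Real.one_div_one_sub_rpow_hasFPowerSeriesOnBall_zero s).hasSum
    (y := x) (by simpa [← ofReal_norm] using hx)
  rw [zero_add, one_div, ← rpow_neg (sub_pos.2 (abs_lt.1 hx).2).le] at h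
  refine h.congr_fun fun n => ?_
  rw [FormalMultilinearSeries.ofScalars_apply_eq, ← Ring.multichoose_eq, smul_eq_mul,
    ← Polynomial.ascPochhammer_smeval_eq_eval, ← Ring.factorial_nsmul_multichoose_eq_ascPochhammer,
    nsmul_eq_mul, mul_div_cancel_left₀ _ (by positivity)]

lemma sum_antidiagonal_div_factorial_mul_pow (c : ℕ → ℝ) (a b : ℝ) (n : ℕ) :
    ∑ p ∈ Finset.HasAntidiagonal.antidiagonal n,
        c (p.1 + p.2) / (p.1.factorial * p.2.factorial) * a ^ p.1 * b ^ p.2 =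
      c n / n.factorial * (a + b) ^ n := by
  rw [(Commute.all a b).add_pow', Finset.mul_sum]
  refine Finset.sum_congr rfl fun p hp => ?_
  rw [← Finset.HasAntidiagonal.mem_antidiagonal.1 hp, nsmul_eq_mul, Nat.cast_add_choose]
  field_simp

lemma summable_div_factorial_mul_pow {c : ℕ → ℝ} {a b : ℝ}
    (hc : Summable fun n => c n / n.factorial * (|a| + |b|) ^ n) :
    Summable fun p : ℕ × ℕ =>
      c (p.1 + p.2) / (p.1.factorial * p.2.factorial) * a ^ p.1 * b ^ p.2 := by
  rw [← Finset.HasAntidiagonal.sigmaAntidiagonalEquivProd.summable_iff, ← summable_norm_iff,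
    summable_sigma_of_nonneg fun _ => norm_nonneg _]
  refine ⟨fun _ => Summable.of_finite, hc.norm.congr fun n => ?_⟩
  have h := sum_antidiagonal_div_factorial_mul_pow (fun n => |c n|) |a| |b| n
  rw [tsum_fintype, norm_mul, norm_div, norm_pow, norm_of_nonneg (by positivity : 0 ≤ |a| + |b|)]
  simp only [norm_eq_abs, Nat.abs_cast]
  rw [← h, ← Finset.sum_coe_sort]
  refine Finset.sum_congr rfl fun p _ => ?_
  simp [abs_mul, abs_div]

lemma hasSum_div_factorial_mul_pow {c : ℕ → ℝ} {a b S : ℝ}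
    (hc : Summable fun n => c n / n.factorial * (|a| + |b|) ^ n)
    (hS : HasSum (fun n => c n / n.factorial * (a + b) ^ n) S) :
    HasSum (fun p : ℕ × ℕ =>
      c (p.1 + p.2) / (p.1.factorial * p.2.factorial) * a ^ p.1 * b ^ p.2) S := by
  rw [← Finset.HasAntidiagonal.sigmaAntidiagonalEquivProd.hasSum_iff]
  refine hS.sigma_of_hasSum (fun n => ?_)
    (Finset.HasAntidiagonal.sigmaAntidiagonalEquivProd.summable_iff.2
      (summable_div_factorial_mul_pow hc))
  rw [← sum_antidiagonal_div_factorial_mul_pow, ← Finset.sum_coe_sort]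
  exact hasSum_fintype _

/-- The Taylor coefficients at the origin of `(1 - a - b) ^ (-s)`, as a function of `(a, b)`. -/
noncomputable def binomCoeff (s : ℝ) (p : ℕ × ℕ) : ℝ :=
  (ascPochhammer ℝ (p.1 + p.2)).eval s / (p.1.factorial * p.2.factorial)

lemma hasSum_binomCoeff (s : ℝ) {a b : ℝ} (hab : |a| + |b| < 1) :
    HasSum (fun p : ℕ × ℕ => binomCoeff s p * a ^ p.1 * b ^ p.2) ((1 - a - b) ^ (-s)) := by
  rw [sub_sub]
  refine hasSum_div_factorial_mul_pow (c := fun n => (ascPochhammer ℝ n).eval s) ?_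
    (hasSum_one_sub_rpow_neg s ((abs_add_le a b).trans_lt hab))
  exact (hasSum_one_sub_rpow_neg s (by rwa [abs_of_nonneg (by positivity)])).summable

lemma succ_mul_binomCoeff (s : ℝ) (i j : ℕ) :
    (i + 1) * binomCoeff s (i + 1, j) = s * binomCoeff (s + 1) (i, j) := by
  rw [binomCoeff, binomCoeff, add_right_comm, ascPochhammer_succ_eval_left, Nat.factorial_succ]
  push_cast
  field_simp

lemma hasSum_fst_mul_binomCoeff (s : ℝ) {a b : ℝ} (hab : |a| + |b| < 1) :
    HasSum (fun p : ℕ × ℕ => p.1 * binomCoeff s p * a ^ (p.1 - 1) * b ^ p.2)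
      (s * (1 - a - b) ^ (-(s + 1))) := by
  have hinj : Function.Injective (Prod.map Nat.succ id : ℕ × ℕ → ℕ × ℕ) :=
    Nat.succ_injective.prodMap Function.injective_id
  refine (hinj.hasSum_iff ?_).1 (((hasSum_binomCoeff (s + 1) hab).mul_left s).congr_fun ?_)
  · rintro ⟨_ | i, j⟩ hp
    · simp
    · exact absurd ⟨(i, j), rfl⟩ hp
  · rintro ⟨i, j⟩
    simp only [Function.comp_apply, Prod.map_apply, id, Nat.succ_eq_add_one, Nat.cast_add_one,
      Nat.add_sub_cancel]
    linear_combination a ^ i * b ^ j * succ_mul_binomCoeff s i j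

end BinomialSeries

section UltrasphericalMeasure

/-- The constant that normalizes the ultraspherical weight `(1 - u ^ 2) ^ (ν - 1 / 2)` on `(-1, 1)`
to a probability density when `-1 / 2 < ν`; for `-1 < ν < -1 / 2` it is its negative continuation
in `ν`, whereas `ν = -1 / 2` gives the junk value `0`. -/
noncomputable def ultrasphericalConst (ν : ℝ) : ℝ :=
  Gamma (ν + 1) / (√π * Gamma (ν + 1 / 2))

/-- The moments of `PiMeas ν`, continued analytically to all `ν > -1`. -/
noncomputable def ultrasphericalMoment (ν : ℝ) (n : ℕ) : ℝ :=
  if Even n then (ascPochhammer ℝ (n / 2)).eval (1 / 2) / (ascPochhammer ℝ (n / 2)).eval (ν + 1)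
  else 0

lemma ultrasphericalMoment_two_mul (ν : ℝ) (k : ℕ) :
    ultrasphericalMoment ν (2 * k) =
      (ascPochhammer ℝ k).eval (1 / 2) / (ascPochhammer ℝ k).eval (ν + 1) := by
  simp [ultrasphericalMoment]

lemma ultrasphericalMoment_of_odd (ν : ℝ) {n : ℕ} (hn : Odd n) : ultrasphericalMoment ν n = 0 :=
  if_neg (Nat.not_even_iff_odd.2 hn)

lemma ultrasphericalMoment_eq_mul_add_one {ν : ℝ} (hν : -1 < ν) (n : ℕ) :
    ultrasphericalMoment ν n = (1 + n / (2 * ν + 2)) * ultrasphericalMoment (ν + 1) n := by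
  rcases n.even_or_odd with hn | hn
  · obtain ⟨k, rfl⟩ := hn.two_dvd
    have hν₁ : ν + 1 ≠ 0 := by linarith
    have hp := (ascPochhammer_pos k (ν + 1) (by linarith)).ne'
    have hp' := (ascPochhammer_pos k (ν + 1 + 1) (by linarith)).ne'
    have h := (ascPochhammer_succ_eval k (ν + 1)).symm.trans (ascPochhammer_succ_eval_left _ _)
    rw [ultrasphericalMoment_two_mul, ultrasphericalMoment_two_mul,
      show 2 * ν + 2 = 2 * (ν + 1) by ring]
    push_cast
    field_simp
    linear_combination -(ascPochhammer ℝ k).eval (1 / 2) * h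
  · simp [ultrasphericalMoment_of_odd _ hn]

lemma one_sub_sq_pos {u : ℝ} (hu : u ∈ Ioo (-1 : ℝ) 1) : 0 < 1 - u ^ 2 := by
  nlinarith [hu.1, hu.2]

lemma integral_pow_mul_one_sub_sq_rpow {ν : ℝ} (hν : -(1 / 2) < ν) (k : ℕ) :
    ∫ u in Ioo (-1 : ℝ) 1, u ^ (2 * k) * (1 - u ^ 2) ^ (ν - 1 / 2) =
      ProbabilityTheory.beta (k + 1 / 2) (ν + 1 / 2) := by
  have hpow {u : ℝ} (hu : 0 < u) : u * (u ^ 2) ^ ((k : ℝ) + 1 / 2 - 1) = u ^ (2 * k) := by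
    rw [← rpow_natCast u 2, ← rpow_mul hu.le, mul_comm, ← rpow_add_one hu.ne', ← rpow_natCast]
    push_cast
    ring_nf
  calc
    _ = 2 * ∫ u in Ioo (0 : ℝ) 1, u ^ (2 * k) * (1 - u ^ 2) ^ (ν - 1 / 2) := by
      rw [← integral_Ioo_neg_self_comp_abs]
      simp only [pow_mul, sq_abs]
    _ = ∫ u in Ioo (0 : ℝ) 1,
          2 * u * ((u ^ 2) ^ ((k : ℝ) + 1 / 2 - 1) * (1 - u ^ 2) ^ (ν + 1 / 2 - 1)) := by
      rw [← integral_const_mul]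
      refine setIntegral_congr_fun measurableSet_Ioo fun u hu => ?_
      simp only [← hpow hu.1]
      ring_nf
    _ = ∫ x in Ioo (0 : ℝ) 1, x ^ ((k : ℝ) + 1 / 2 - 1) * (1 - x) ^ (ν + 1 / 2 - 1) :=
      integral_Ioo_zero_one_comp_sq fun x => x ^ ((k : ℝ) + 1 / 2 - 1) * (1 - x) ^ (ν + 1 / 2 - 1)
    _ = _ := integral_rpow_mul_one_sub_rpow (by positivity) (by linarith)

lemma integrableOn_one_sub_sq_rpow {ν : ℝ} (hν : -(1 / 2) < ν) :
    IntegrableOn (fun u : ℝ => (1 - u ^ 2) ^ (ν - 1 / 2)) (Ioo (-1) 1) := by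
  have h := integral_pow_mul_one_sub_sq_rpow hν 0
  simp only [mul_zero, pow_zero, one_mul] at h
  exact .of_integral_ne_zero
    (h.trans_ne (ProbabilityTheory.beta_pos (by positivity) (by linarith)).ne')

lemma ultrasphericalConst_mul_beta {ν : ℝ} (hν : -(1 / 2) < ν) (k : ℕ) :
    ultrasphericalConst ν * ProbabilityTheory.beta (k + 1 / 2) (ν + 1 / 2) =
      (ascPochhammer ℝ k).eval (1 / 2) / (ascPochhammer ℝ k).eval (ν + 1) := by
  have hν₁ : 0 < ν + 1 := by linarith
  have hΓ := (Gamma_pos_of_pos (by linarith : 0 < ν + 1 / 2)).ne'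
  have hΓ₁ := (Gamma_pos_of_pos hν₁).ne'
  rw [ultrasphericalConst, ProbabilityTheory.beta,
    show (k : ℝ) + 1 / 2 + (ν + 1 / 2) = ν + 1 + k by ring, add_comm (k : ℝ),
    Gamma_add_nat_eq_ascPochhammer_mul hν₁, Gamma_add_nat_eq_ascPochhammer_mul one_half_pos,
    Gamma_one_half_eq]
  have hp := (ascPochhammer_pos k (ν + 1) hν₁).ne'
  have hπ : √π ≠ 0 := by positivity
  generalize Gamma (ν + 1 / 2) = G at hΓ ⊢
  field_simp

lemma integral_PiMeas_neg_half (f : ℝ → ℝ) :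
    ∫ u, f u ∂PiMeas (-(1 / 2)) = (f (-1) + f 1) / 2 := by
  rw [PiMeas, if_pos rfl, integral_smul_measure,
    integral_add_measure (integrable_dirac (by simp)) (integrable_dirac (by simp))]
  simp
  ring

lemma integral_PiMeas {ν : ℝ} (hν : -(1 / 2) < ν) (f : ℝ → ℝ) :
    ∫ u, f u ∂PiMeas ν =
      ultrasphericalConst ν * ∫ u in Ioo (-1 : ℝ) 1, f u * (1 - u ^ 2) ^ (ν - 1 / 2) := by
  rw [PiMeas, if_neg hν.ne', integral_withDensity_eq_integral_toReal_smul (by fun_prop)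
    (.of_forall fun _ => ENNReal.ofReal_lt_top), integral_Icc_eq_integral_Ioo,
    ← integral_const_mul]
  refine setIntegral_congr_fun measurableSet_Ioo fun u hu => ?_
  have hΓ := Gamma_pos_of_pos (by linarith : 0 < ν + 1 / 2)
  have hΓ₁ := Gamma_pos_of_pos (by linarith : 0 < ν + 1)
  have hu' := one_sub_sq_pos hu
  rw [ENNReal.toReal_ofReal (by positivity), ultrasphericalConst, smul_eq_mul]
  ring

lemma isFiniteMeasure_PiMeas {ν : ℝ} (hν : -(1 / 2) ≤ ν) : IsFiniteMeasure (PiMeas ν) := by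
  unfold PiMeas
  split_ifs with h
  · exact Measure.smul_finite _ (by simp)
  · refine isFiniteMeasure_withDensity_ofReal (Integrable.hasFiniteIntegral (.const_mul ?_ _))
    exact (integrableOn_Icc_iff_integrableOn_Ioo).2
      (integrableOn_one_sub_sq_rpow (hν.lt_of_ne' h))

lemma ae_abs_le_one_PiMeas (ν : ℝ) : ∀ᵐ u ∂PiMeas ν, |u| ≤ 1 := by
  unfold PiMeas
  split_ifs
  · refine Measure.ae_smul_measure ?_ _
    simp [ae_add_measure_iff, ae_dirac_eq]
  · exact (withDensity_absolutelyContinuous _ _).ae_le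
      (ae_restrict_of_forall_mem measurableSet_Icc fun u hu => abs_le.2 hu)

lemma integral_pow_PiMeas {ν : ℝ} (hν : -(1 / 2) ≤ ν) (n : ℕ) :
    ∫ u, u ^ n ∂PiMeas ν = ultrasphericalMoment ν n := by
  rcases n.even_or_odd with hn | hn <;> rcases hν.eq_or_lt with rfl | hν
  · obtain ⟨k, rfl⟩ := hn.two_dvd
    have hp := (ascPochhammer_pos k (1 / 2 : ℝ) one_half_pos).ne'
    rw [integral_PiMeas_neg_half, ultrasphericalMoment_two_mul,
      show -(1 / 2 : ℝ) + 1 = 1 / 2 by norm_num, div_self hp]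
    simp
  · obtain ⟨k, rfl⟩ := hn.two_dvd
    rw [integral_PiMeas hν, integral_pow_mul_one_sub_sq_rpow hν, ultrasphericalConst_mul_beta hν,
      ultrasphericalMoment_two_mul]
  · rw [integral_PiMeas_neg_half, hn.neg_one_pow, ultrasphericalMoment_of_odd _ hn]
    simp
  · have hodd : Function.Odd fun u : ℝ => u ^ n * (1 - u ^ 2) ^ (ν - 1 / 2) := fun u => by
      simp [hn.neg_pow]
    rw [integral_PiMeas hν, integral_Ioo_neg_self_of_odd hodd, mul_zero,
      ultrasphericalMoment_of_odd _ hn]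

end UltrasphericalMeasure

section UltrasphericalPrimitive

lemma PiFun_eq (ν u : ℝ) :
    PiFun ν u = ultrasphericalConst ν * ∫ w in (0 : ℝ)..u, (1 - w ^ 2) ^ (ν - 1 / 2) := rfl

lemma PiFun_neg (ν u : ℝ) : PiFun ν (-u) = -PiFun ν u := by
  have h := intervalIntegral.integral_comp_neg (a := 0) (b := u)
    (f := fun w : ℝ => (1 - w ^ 2) ^ (ν - 1 / 2))
  simp only [neg_sq, neg_zero] at h
  rw [PiFun_eq, PiFun_eq, h, intervalIntegral.integral_symm, mul_neg]

lemma PiFun_one {ν : ℝ} (hν : -(1 / 2) < ν) : PiFun ν 1 = 1 / 2 := by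
  have hmass := ultrasphericalConst_mul_beta hν 0
  rw [← integral_pow_mul_one_sub_sq_rpow hν] at hmass
  have habs := integral_Ioo_neg_self_comp_abs (fun w => (1 - w ^ 2) ^ (ν - 1 / 2)) 1
  simp only [sq_abs] at habs
  simp only [mul_zero, pow_zero, one_mul, ascPochhammer_zero, Polynomial.eval_one, habs] at hmass
  rw [PiFun_eq, intervalIntegral.integral_of_le zero_le_one, integral_Ioc_eq_integral_Ioo]
  linarith

lemma intervalIntegrable_one_sub_sq_rpow {ν : ℝ} (hν : -(1 / 2) < ν) :
    IntervalIntegrable (fun u : ℝ => (1 - u ^ 2) ^ (ν - 1 / 2)) volume (-1) 1 := by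
  rw [intervalIntegrable_iff_integrableOn_Ioo_of_le (by norm_num)]
  exact integrableOn_one_sub_sq_rpow hν

lemma continuousOn_PiFun {ν : ℝ} (hν : -(1 / 2) < ν) : ContinuousOn (PiFun ν) (Icc (-1) 1) := by
  rw [← uIcc_of_le (by norm_num : (-1 : ℝ) ≤ 1)]
  exact continuousOn_const.mul (intervalIntegral.continuousOn_primitive_interval'
    (intervalIntegrable_one_sub_sq_rpow hν) (by simp))

lemma continuousOn_one_sub_sq_rpow (γ : ℝ) :
    ContinuousOn (fun u : ℝ => (1 - u ^ 2) ^ γ) (Ioo (-1) 1) :=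
  ContinuousOn.rpow_const (by fun_prop) fun _ hu => Or.inl (one_sub_sq_pos hu).ne'

lemma uIcc_zero_subset_Ioo_neg_one_one {u : ℝ} (hu : u ∈ Ioo (-1 : ℝ) 1) : uIcc 0 u ⊆ Ioo (-1) 1 :=
  OrdConnected.uIcc_subset inferInstance (by simp) hu

lemma intervalIntegrable_one_sub_sq_rpow_of_mem_Ioo (γ : ℝ) {u : ℝ} (hu : u ∈ Ioo (-1 : ℝ) 1) :
    IntervalIntegrable (fun w : ℝ => (1 - w ^ 2) ^ γ) volume 0 u :=
  ((continuousOn_one_sub_sq_rpow γ).mono (uIcc_zero_subset_Ioo_neg_one_one hu)).intervalIntegrable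

lemma hasDerivAt_PiFun (ν : ℝ) {u : ℝ} (hu : u ∈ Ioo (-1 : ℝ) 1) :
    HasDerivAt (PiFun ν) (ultrasphericalConst ν * (1 - u ^ 2) ^ (ν - 1 / 2)) u := by
  have hc := continuousOn_one_sub_sq_rpow (ν - 1 / 2)
  exact .const_mul _ (intervalIntegral.integral_hasDerivAt_right
    (intervalIntegrable_one_sub_sq_rpow_of_mem_Ioo _ hu)
    (hc.stronglyMeasurableAtFilter isOpen_Ioo u hu) (hc.continuousAt (isOpen_Ioo.mem_nhds hu)))

lemma hasDerivAt_mul_one_sub_sq_rpow (γ : ℝ) {u : ℝ} (hu : u ∈ Ioo (-1 : ℝ) 1) :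
    HasDerivAt (fun w : ℝ => w * (1 - w ^ 2) ^ (γ + 1))
      ((2 * γ + 3) * (1 - u ^ 2) ^ (γ + 1) - (2 * γ + 2) * (1 - u ^ 2) ^ γ) u := by
  have hpos := one_sub_sq_pos hu
  have hsq : HasDerivAt (fun w : ℝ => 1 - w ^ 2) (-(2 * u)) u := by
    simpa using (hasDerivAt_pow 2 u).const_sub 1
  convert! (hasDerivAt_id u).mul (hsq.rpow_const (p := γ + 1) (Or.inl hpos.ne')) using 1
  rw [add_sub_cancel_right, rpow_add_one hpos.ne', id]
  ring

lemma mul_one_sub_sq_rpow_eq_integral_sub (γ : ℝ) {u : ℝ} (hu : u ∈ Ioo (-1 : ℝ) 1) :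
    u * (1 - u ^ 2) ^ (γ + 1) = (2 * γ + 3) * (∫ w in (0 : ℝ)..u, (1 - w ^ 2) ^ (γ + 1)) -
      (2 * γ + 2) * ∫ w in (0 : ℝ)..u, (1 - w ^ 2) ^ γ := by
  have hint (δ : ℝ) := intervalIntegrable_one_sub_sq_rpow_of_mem_Ioo δ hu
  have h := intervalIntegral.integral_eq_sub_of_hasDerivAt
    (fun w hw => hasDerivAt_mul_one_sub_sq_rpow γ (uIcc_zero_subset_Ioo_neg_one_one hu hw))
    (((hint _).const_mul _).sub ((hint _).const_mul _))
  rw [intervalIntegral.integral_sub ((hint _).const_mul _) ((hint _).const_mul _),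
    intervalIntegral.integral_const_mul, intervalIntegral.integral_const_mul, zero_mul,
    sub_zero] at h
  exact h.symm

lemma ultrasphericalConst_add_one {ν : ℝ} (hν : -1 < ν) (hν' : ν ≠ -(1 / 2)) :
    (2 * ν + 1) * ultrasphericalConst (ν + 1) = (2 * ν + 2) * ultrasphericalConst ν := by
  have hne : ν + 1 / 2 ≠ 0 := fun h => hν' (by linarith)
  have hne₂ : 2 * ν + 1 ≠ 0 := fun h => hν' (by linarith)
  have hΓ : Gamma (ν + 1 / 2 + 1) ≠ 0 := (Gamma_pos_of_pos (by linarith)).ne'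
  rw [Gamma_add_one hne] at hΓ
  have hΓ' := right_ne_zero_of_mul hΓ
  rw [ultrasphericalConst, ultrasphericalConst, Gamma_add_one (s := ν + 1) (by linarith),
    show ν + 1 + 1 / 2 = ν + 1 / 2 + 1 by ring, Gamma_add_one hne]
  generalize Gamma (ν + 1 / 2) = G at hΓ' ⊢
  field_simp

lemma PiFun_eq_PiFun_add_one_sub {ν : ℝ} (hν : -1 < ν) (hν' : ν ≠ -(1 / 2)) {u : ℝ}
    (hu : u ∈ Ioo (-1 : ℝ) 1) :
    PiFun ν u = PiFun (ν + 1) u -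
      ultrasphericalConst (ν + 1) / (2 * ν + 2) * (u * (1 - u ^ 2) ^ (ν + 1 - 1 / 2)) := by
  have hν₁ : ν + 1 ≠ 0 := by linarith
  have hconst : ultrasphericalConst ν =
      (2 * ν + 1) * ultrasphericalConst (ν + 1) / (2 * ν + 2) := by
    rw [ultrasphericalConst_add_one hν hν', mul_div_cancel_left₀ _ (by linarith)]
  have h := mul_one_sub_sq_rpow_eq_integral_sub (ν - 1 / 2) hu
  rw [show ν - 1 / 2 + 1 = ν + 1 - 1 / 2 by ring] at h
  rw [PiFun_eq, PiFun_eq, h, hconst]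
  field_simp
  ring

lemma integrableOn_mul_one_sub_sq_rpow {ν : ℝ} (hν : -(1 / 2) < ν) {f : ℝ → ℝ}
    (hf : ContinuousOn f (Icc (-1) 1)) :
    IntegrableOn (fun u : ℝ => f u * (1 - u ^ 2) ^ (ν - 1 / 2)) (Ioo (-1) 1) := by
  have h := (integrableOn_Icc_iff_integrableOn_Ioo (f := fun u : ℝ => (1 - u ^ 2) ^ (ν - 1 / 2))
    (a := -1) (b := 1) (μ := volume)).2 (integrableOn_one_sub_sq_rpow hν)
  exact (h.continuousOn_mul hf isCompact_Icc).mono_set Ioo_subset_Icc_self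

lemma integrableOn_PiFun {ν : ℝ} (hν : -1 < ν) (hν' : ν ≠ -(1 / 2)) :
    IntegrableOn (PiFun ν) (Ioo (-1) 1) := by
  have hν₁ : -(1 / 2) < ν + 1 := by linarith
  have hcont : IntegrableOn (PiFun (ν + 1)) (Ioo (-1) 1) :=
    (continuousOn_PiFun hν₁).integrableOn_Icc.mono_set Ioo_subset_Icc_self
  have hweight : IntegrableOn (fun u : ℝ => u * (1 - u ^ 2) ^ (ν + 1 - 1 / 2)) (Ioo (-1) 1) :=
    integrableOn_mul_one_sub_sq_rpow hν₁ continuousOn_id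
  exact (hcont.sub (hweight.const_mul (ultrasphericalConst (ν + 1) / (2 * ν + 2)))).congr_fun
    (fun u hu => (PiFun_eq_PiFun_add_one_sub hν hν' hu).symm) measurableSet_Ioo

lemma integral_PiMeas_eq_sub_integral_deriv_mul_PiFun {ν : ℝ} (hν : -(1 / 2) < ν) {f f' : ℝ → ℝ}
    (hf : ∀ u ∈ Icc (-1 : ℝ) 1, HasDerivAt f (f' u) u) (hf' : ContinuousOn f' (Icc (-1) 1)) :
    ∫ u, f u ∂PiMeas ν =
      ∫ u, f u ∂PiMeas (-(1 / 2)) - ∫ u in Ioo (-1 : ℝ) 1, f' u * PiFun ν u := by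
  have huIcc : uIcc (-1 : ℝ) 1 = Icc (-1) 1 := uIcc_of_le (by norm_num)
  have hparts := intervalIntegral.integral_mul_deriv_eq_deriv_mul_of_hasDerivAt
    (huIcc ▸ continuousOn_PiFun hν) (huIcc ▸ HasDerivAt.continuousOn hf)
    (fun u hu => hasDerivAt_PiFun ν (by simpa using hu))
    (fun u hu => hf u (Ioo_subset_Icc_self (by simpa using hu)))
    ((intervalIntegrable_one_sub_sq_rpow hν).const_mul _) (huIcc ▸ hf').intervalIntegrable
  simp only [intervalIntegral.integral_of_le (by norm_num : (-1 : ℝ) ≤ 1),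
    integral_Ioc_eq_integral_Ioo, PiFun_neg, PiFun_one hν, mul_assoc, integral_const_mul] at hparts
  simp only [integral_PiMeas_neg_half, integral_PiMeas hν, mul_comm (f _), mul_comm (f' _), hparts]
  ring

lemma integral_PiMeas_neg_half_sub_integral_deriv_mul_PiFun {ν : ℝ} (hν : -1 < ν)
    (hν' : ν ≠ -(1 / 2)) {f f' : ℝ → ℝ} (hf : ∀ u ∈ Icc (-1 : ℝ) 1, HasDerivAt f (f' u) u)
    (hf' : ContinuousOn f' (Icc (-1) 1)) :
    ∫ u, f u ∂PiMeas (-(1 / 2)) - ∫ u in Ioo (-1 : ℝ) 1, f' u * PiFun ν u =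
      ∫ u, f u ∂PiMeas (ν + 1) + 1 / (2 * ν + 2) * ∫ u, f' u * u ∂PiMeas (ν + 1) := by
  have hν₁ : -(1 / 2) < ν + 1 := by linarith
  have hcont : IntegrableOn (fun u => f' u * PiFun (ν + 1) u) (Ioo (-1) 1) :=
    (hf'.mul (continuousOn_PiFun hν₁)).integrableOn_Icc.mono_set Ioo_subset_Icc_self
  have hweight : IntegrableOn (fun u => f' u * u * (1 - u ^ 2) ^ (ν + 1 - 1 / 2)) (Ioo (-1) 1) :=
    integrableOn_mul_one_sub_sq_rpow hν₁ (hf'.mul continuousOn_id)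
  have hsplit : ∫ u in Ioo (-1 : ℝ) 1, f' u * PiFun ν u =
      (∫ u in Ioo (-1 : ℝ) 1, f' u * PiFun (ν + 1) u) -
        1 / (2 * ν + 2) * ∫ u, f' u * u ∂PiMeas (ν + 1) := by
    rw [integral_PiMeas hν₁, ← mul_assoc, ← integral_const_mul,
      ← integral_sub hcont (hweight.const_mul _)]
    refine setIntegral_congr_fun measurableSet_Ioo fun u hu => ?_
    simp only [PiFun_eq_PiFun_add_one_sub hν hν' hu]
    ring
  rw [hsplit, integral_PiMeas_eq_sub_integral_deriv_mul_PiFun hν₁ hf hf']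
  ring

lemma integral_pow_PiMeas_neg_half_sub_integral_pow_mul_PiFun {ν : ℝ} (hν : -1 < ν)
    (hν' : ν ≠ -(1 / 2)) (n : ℕ) :
    ∫ u, u ^ n ∂PiMeas (-(1 / 2)) - n * ∫ u in Ioo (-1 : ℝ) 1, u ^ (n - 1) * PiFun ν u =
      ultrasphericalMoment ν n := by
  have hν₁ : -(1 / 2) ≤ ν + 1 := by linarith
  have h := integral_PiMeas_neg_half_sub_integral_deriv_mul_PiFun hν hν'
    (fun u _ => hasDerivAt_pow n u) (by fun_prop)
  have hpow (u : ℝ) : (n : ℝ) * u ^ (n - 1) * u = n * u ^ n := by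
    cases n <;> simp [pow_succ, mul_assoc]
  simp only [hpow, mul_assoc, integral_const_mul, integral_pow_PiMeas hν₁] at h
  rw [h, ultrasphericalMoment_eq_mul_add_one hν]
  ring

end UltrasphericalPrimitive

section TermwiseIntegration

variable {ι : Type*} [Countable ι] {μ ν : Measure ℝ} {c : ι → ℝ} {h : ℝ → ℝ}

lemma hasSum_mul_integral_pow_mul (hμ : ∀ᵐ u ∂μ, |u| ≤ 1) (hh : Integrable h μ) (hc : Summable c)
    {d : ι → ℕ} {F : ℝ → ℝ} (hF : ∀ᵐ u ∂μ, HasSum (fun i => c i * u ^ d i) (F u)) :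
    HasSum (fun i => c i * ∫ u, u ^ d i * h u ∂μ) (∫ u, F u * h u ∂μ) := by
  simp only [← integral_const_mul, ← mul_assoc]
  refine hasSum_integral_of_dominated_convergence (fun i u => |c i| * |h u|)
    (fun i => (Continuous.aestronglyMeasurable (by fun_prop)).mul hh.1) (fun i => ?_)
    (.of_forall fun u => hc.abs.mul_right _) ?_ (hF.mono fun u hu => hu.mul_right _)
  · filter_upwards [hμ] with u hu
    rw [norm_mul, norm_mul, norm_pow]
    exact mul_le_mul_of_nonneg_right
      (mul_le_of_le_one_right (norm_nonneg _) (pow_le_one₀ (norm_nonneg u) hu)) (norm_nonneg _)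
  · simp only [tsum_mul_right]
    exact hh.abs.const_mul _

lemma abs_integral_pow_mul_le (hμ : ∀ᵐ u ∂μ, |u| ≤ 1) (hh : Integrable h μ) (n : ℕ) :
    |∫ u, u ^ n * h u ∂μ| ≤ ∫ u, |h u| ∂μ := by
  refine norm_integral_le_of_norm_le (f := fun u => u ^ n * h u) hh.abs (hμ.mono fun u hu => ?_)
  rw [norm_mul, norm_pow]
  exact mul_le_of_le_one_left (norm_nonneg _) (pow_le_one₀ (norm_nonneg u) hu)

lemma hasSum_mul_integral_pow_mul_integral_pow [IsFiniteMeasure ν] (hμ : ∀ᵐ u ∂μ, |u| ≤ 1)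
    (hν : ∀ᵐ v ∂ν, |v| ≤ 1) (hh : Integrable h μ) {d e : ι → ℕ} {F : ℝ → ℝ → ℝ}
    (hF : ∀ u v, |u| ≤ 1 → |v| ≤ 1 → HasSum (fun i => c i * u ^ d i * v ^ e i) (F u v)) :
    HasSum (fun i => c i * (∫ u, u ^ d i * h u ∂μ) * ∫ v, v ^ e i ∂ν)
      (∫ v, ∫ u, F u v * h u ∂μ ∂ν) := by
  have hc : Summable c := by simpa using (hF 1 1 (by simp) (by simp)).summable
  have hcI : Summable fun i => c i * ∫ u, u ^ d i * h u ∂μ :=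
    .of_norm_bounded (hc.abs.mul_right _) fun i => by
      rw [norm_mul]
      exact mul_le_mul_of_nonneg_left (abs_integral_pow_mul_le hμ hh _) (abs_nonneg _)
  have hinner : ∀ᵐ v ∂ν, HasSum (fun i => c i * (∫ u, u ^ d i * h u ∂μ) * v ^ e i)
      (∫ u, F u v * h u ∂μ) := hν.mono fun v hv => by
    have hcv : Summable fun i => c i * v ^ e i := by simpa using (hF 1 v (by simp) hv).summable
    have hsum := hasSum_mul_integral_pow_mul hμ hh hcv
      (hμ.mono fun u hu => by simpa only [mul_right_comm] using hF u v hu hv)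
    simpa only [mul_right_comm] using hsum
  simpa only [mul_one] using hasSum_mul_integral_pow_mul hν (integrable_const (1 : ℝ)) hcI hinner

end TermwiseIntegration

section AppellSeries

lemma binomCoeff_two_mul_two_mul (s : ℝ) (i j : ℕ) :
    binomCoeff s (2 * i, 2 * j) * (ascPochhammer ℝ i).eval (1 / 2) *
        (ascPochhammer ℝ j).eval (1 / 2) =
      (ascPochhammer ℝ (i + j)).eval (s / 2) * (ascPochhammer ℝ (i + j)).eval ((s + 1) / 2) /
        (i.factorial * j.factorial) := by
  have hi := (ascPochhammer_pos i (1 / 2 : ℝ) one_half_pos).ne'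
  have hj := (ascPochhammer_pos j (1 / 2 : ℝ) one_half_pos).ne'
  simp only [binomCoeff, ← mul_add, ascPochhammer_eval_two_mul, cast_factorial_two_mul]
  field_simp
  ring

lemma tsum_binomCoeff_mul_ultrasphericalMoment (α β s z w : ℝ) :
    ∑' p : ℕ × ℕ, binomCoeff s p * z ^ p.1 * w ^ p.2 * ultrasphericalMoment α p.1 *
        ultrasphericalMoment β p.2 =
      F4 (s / 2) ((s + 1) / 2) (α + 1) (β + 1) (z ^ 2) (w ^ 2) := by
  have hinj : Function.Injective (Prod.map (2 * ·) (2 * ·) : ℕ × ℕ → ℕ × ℕ) :=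
    (mul_right_injective₀ two_ne_zero).prodMap (mul_right_injective₀ two_ne_zero)
  rw [F4, ← hinj.tsum_eq]
  · refine tsum_congr fun p => ?_
    simp only [Prod.map, ultrasphericalMoment_two_mul, pow_mul]
    linear_combination (z ^ 2) ^ p.1 * (w ^ 2) ^ p.2 /
      ((ascPochhammer ℝ p.1).eval (α + 1) * (ascPochhammer ℝ p.2).eval (β + 1)) *
      binomCoeff_two_mul_two_mul s p.1 p.2
  · rintro ⟨i, j⟩ hp
    rcases i.even_or_odd with hi | hi
    · rcases j.even_or_odd with hj | hj
      · obtain ⟨a, rfl⟩ := hi.two_dvd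
        obtain ⟨b, rfl⟩ := hj.two_dvd
        exact ⟨(a, b), rfl⟩
      · simp [ultrasphericalMoment_of_odd _ hj] at hp
    · simp [ultrasphericalMoment_of_odd _ hi] at hp

end AppellSeries

section Kernel

/-- The coefficient of `u` in `(1 - qf θ φ u v) / cosh (t / 2)`; its square is the first variable
of the Appell series in `Hker`. -/
noncomputable def sinRatio (t θ φ : ℝ) : ℝ :=
  sin (θ / 2) * sin (φ / 2) / cosh (t / 2)

/-- The coefficient of `v` in `(1 - qf θ φ u v) / cosh (t / 2)`; its square is the second variable
of the Appell series in `Hker`. -/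
noncomputable def cosRatio (t θ φ : ℝ) : ℝ :=
  cos (θ / 2) * cos (φ / 2) / cosh (t / 2)

lemma abs_sin_mul_sin_add_abs_cos_mul_cos_le_one (x y : ℝ) :
    |sin x * sin y| + |cos x * cos y| ≤ 1 := by
  rw [abs_mul, abs_mul]
  nlinarith [two_mul_le_add_sq |sin x| |sin y|, two_mul_le_add_sq |cos x| |cos y|,
    sq_abs (sin x), sq_abs (sin y), sq_abs (cos x), sq_abs (cos y), sin_sq_add_cos_sq x,
    sin_sq_add_cos_sq y]

variable {α β t θ φ u v : ℝ}

lemma abs_mul_sinRatio_add_abs_mul_cosRatio_lt_one (ht : t ≠ 0) (hu : |u| ≤ 1) (hv : |v| ≤ 1) :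
    |u * sinRatio t θ φ| + |v * cosRatio t θ φ| < 1 := by
  have hcosh : 1 < cosh (t / 2) := one_lt_cosh.2 (by simpa using ht)
  calc
    _ ≤ |sinRatio t θ φ| + |cosRatio t θ φ| := by
      rw [abs_mul, abs_mul]
      exact add_le_add (mul_le_of_le_one_left (abs_nonneg _) hu)
        (mul_le_of_le_one_left (abs_nonneg _) hv)
    _ = (|sin (θ / 2) * sin (φ / 2)| + |cos (θ / 2) * cos (φ / 2)|) / cosh (t / 2) := by
      rw [sinRatio, cosRatio, abs_div, abs_div, abs_of_pos (cosh_pos (t / 2)), add_div]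
    _ ≤ 1 / cosh (t / 2) := by
      gcongr
      exact abs_sin_mul_sin_add_abs_cos_mul_cos_le_one _ _
    _ < 1 := by rwa [div_lt_one (by positivity)]

lemma one_sub_mul_sinRatio_sub_mul_cosRatio_pos (ht : t ≠ 0) (hu : |u| ≤ 1) (hv : |v| ≤ 1) :
    0 < 1 - u * sinRatio t θ φ - v * cosRatio t θ φ := by
  linarith [abs_mul_sinRatio_add_abs_mul_cosRatio_lt_one (θ := θ) (φ := φ) ht hu hv,
    le_abs_self (u * sinRatio t θ φ), le_abs_self (v * cosRatio t θ φ)]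

/-- The common prefactor of `Hker` and of `Psi` written as a multiple of a binomial power. -/
noncomputable def kernelConst (α β t : ℝ) : ℝ :=
  cab α β * sinh (t / 2) / cosh (t / 2) ^ (α + β + 2)

/-- The Taylor coefficients of `Psi α β t θ φ u v` in `(u, v)` at the origin. -/
noncomputable def psiCoeff (α β t θ φ : ℝ) (p : ℕ × ℕ) : ℝ :=
  kernelConst α β t *
    (binomCoeff (α + β + 2) p * sinRatio t θ φ ^ p.1 * cosRatio t θ φ ^ p.2)

lemma Hker_eq_tsum_psiCoeff (α β t θ φ : ℝ) :
    Hker α β t θ φ = ∑' p : ℕ × ℕ,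
      psiCoeff α β t θ φ p * ultrasphericalMoment α p.1 * ultrasphericalMoment β p.2 := by
  simp only [psiCoeff, mul_assoc, tsum_mul_left]
  simp only [← mul_assoc, tsum_binomCoeff_mul_ultrasphericalMoment]
  rw [add_assoc (α + β), show (2 : ℝ) + 1 = 3 by norm_num]
  rfl

lemma Psi_eq_kernelConst_mul_rpow (h : 0 < 1 - u * sinRatio t θ φ - v * cosRatio t θ φ) :
    Psi α β t θ φ u v =
      kernelConst α β t * (1 - u * sinRatio t θ φ - v * cosRatio t θ φ) ^ (-(α + β + 2)) := by
  have hcosh := cosh_pos (t / 2)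
  have hfactor : cosh (t / 2) - 1 + qf θ φ u v =
      cosh (t / 2) * (1 - u * sinRatio t θ φ - v * cosRatio t θ φ) := by
    rw [qf, sinRatio, cosRatio]
    field_simp
    ring
  rw [Psi, hfactor, mul_rpow hcosh.le h.le, rpow_neg h.le, kernelConst]
  field_simp

lemma deriv_Psi (h : 0 < 1 - u * sinRatio t θ φ - v * cosRatio t θ φ) :
    deriv (fun u' => Psi α β t θ φ u' v) u =
      kernelConst α β t * sinRatio t θ φ * ((α + β + 2) *
        (1 - u * sinRatio t θ φ - v * cosRatio t θ φ) ^ (-(α + β + 2 + 1))) := by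
  have hlin : HasDerivAt (fun u' => 1 - u' * sinRatio t θ φ - v * cosRatio t θ φ)
      (-sinRatio t θ φ) u := by
    simpa using (((hasDerivAt_id u).mul_const (sinRatio t θ φ)).const_sub 1).sub_const
      (v * cosRatio t θ φ)
  have heq : (fun u' => Psi α β t θ φ u' v) =ᶠ[nhds u] fun u' =>
      kernelConst α β t * (1 - u' * sinRatio t θ φ - v * cosRatio t θ φ) ^ (-(α + β + 2)) :=
    (hlin.continuousAt.eventually (lt_mem_nhds h)).mono fun _ => Psi_eq_kernelConst_mul_rpow
  have hrpow := (hlin.rpow_const (p := -(α + β + 2)) (Or.inl h.ne')).const_mul (kernelConst α β t)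
  rw [heq.deriv_eq, hrpow.deriv, ← neg_add']
  ring

lemma hasSum_psiCoeff_mul_pow (ht : t ≠ 0) (hu : |u| ≤ 1) (hv : |v| ≤ 1) :
    HasSum (fun p : ℕ × ℕ => psiCoeff α β t θ φ p * u ^ p.1 * v ^ p.2) (Psi α β t θ φ u v) := by
  rw [Psi_eq_kernelConst_mul_rpow (one_sub_mul_sinRatio_sub_mul_cosRatio_pos ht hu hv)]
  have h := hasSum_binomCoeff (α + β + 2)
    (abs_mul_sinRatio_add_abs_mul_cosRatio_lt_one (θ := θ) (φ := φ) ht hu hv)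
  refine (h.mul_left _).congr_fun fun p => ?_
  rw [psiCoeff]
  ring

lemma hasSum_fst_mul_psiCoeff_mul_pow (ht : t ≠ 0) (hu : |u| ≤ 1) (hv : |v| ≤ 1) :
    HasSum (fun p : ℕ × ℕ => p.1 * psiCoeff α β t θ φ p * u ^ (p.1 - 1) * v ^ p.2)
      (deriv (fun u' => Psi α β t θ φ u' v) u) := by
  rw [deriv_Psi (one_sub_mul_sinRatio_sub_mul_cosRatio_pos ht hu hv)]
  have h := hasSum_fst_mul_binomCoeff (α + β + 2)
    (abs_mul_sinRatio_add_abs_mul_cosRatio_lt_one (θ := θ) (φ := φ) ht hu hv)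
  refine (h.mul_left _).congr_fun fun ⟨i, j⟩ => ?_
  cases i <;> simp only [psiCoeff, Nat.cast_zero, zero_mul, mul_zero, Nat.add_sub_cancel]
  ring

end Kernel

theorem jacobi_poisson_representation_low_alpha_general {α β t : ℝ} (hα : -1 < α)
    (hα' : α ≠ -(1 / 2)) (hβ : -(1 / 2) ≤ β) (ht : t ≠ 0) (θ φ : ℝ) :
    Hker α β t θ φ =
      (∫ v, (∫ u in Ioo (-1 : ℝ) 1,
          (-(deriv (fun u' => Psi α β t θ φ u' v) u)) * PiFun α u) ∂(PiMeas β))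
      + ∫ v, (∫ u, Psi α β t θ φ u v ∂(PiMeas (-(1 / 2)))) ∂(PiMeas β) := by
  have := isFiniteMeasure_PiMeas hβ
  have := isFiniteMeasure_PiMeas (le_refl (-(1 / 2)))
  have hIoo : ∀ᵐ u ∂volume.restrict (Ioo (-1 : ℝ) 1), |u| ≤ 1 :=
    ae_restrict_of_forall_mem measurableSet_Ioo fun u hu => (abs_lt.2 hu).le
  have hendpoints := hasSum_mul_integral_pow_mul_integral_pow (ae_abs_le_one_PiMeas (-(1 / 2)))
    (ae_abs_le_one_PiMeas β) (integrable_const (1 : ℝ))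
    fun u v => hasSum_psiCoeff_mul_pow (α := α) (β := β) (θ := θ) (φ := φ) ht
  have hderiv := hasSum_mul_integral_pow_mul_integral_pow hIoo (ae_abs_le_one_PiMeas β)
    (integrableOn_PiFun hα hα')
    fun u v => hasSum_fst_mul_psiCoeff_mul_pow (α := α) (β := β) (θ := θ) (φ := φ) ht
  simp only [mul_one] at hendpoints
  have hterm (p : ℕ × ℕ) : psiCoeff α β t θ φ p * ultrasphericalMoment α p.1 *
        ultrasphericalMoment β p.2 =
      psiCoeff α β t θ φ p * (∫ u, u ^ p.1 ∂PiMeas (-(1 / 2))) * (∫ v, v ^ p.2 ∂PiMeas β) -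
        p.1 * psiCoeff α β t θ φ p * (∫ u in Ioo (-1 : ℝ) 1, u ^ (p.1 - 1) * PiFun α u) *
          ∫ v, v ^ p.2 ∂PiMeas β := by
    rw [← integral_pow_PiMeas_neg_half_sub_integral_pow_mul_PiFun hα hα', integral_pow_PiMeas hβ]
    ring
  simp only [Hker_eq_tsum_psiCoeff, hterm, (hendpoints.sub hderiv).tsum_eq, neg_mul, integral_neg]
  ring

theorem jacobi_poisson_representation_low_alpha (α β : ℝ)
    (hα₁ : -1 < α) (hα₂ : α < -(1/2)) (hβ : -(1/2) ≤ β)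
    (t : ℝ) (ht : 0 < t) (θ φ : ℝ) (hθ : θ ∈ Icc (0 : ℝ) π) (hφ : φ ∈ Icc (0 : ℝ) π) :
    Hker α β t θ φ =
      (∫ v, (∫ u in Ioo (-1 : ℝ) 1,
          (-(deriv (fun u' => Psi α β t θ φ u' v) u)) * PiFun α u) ∂(PiMeas β))
      + ∫ v, (∫ u, Psi α β t θ φ u v ∂(PiMeas (-(1/2)))) ∂(PiMeas β) :=
  jacobi_poisson_representation_low_alpha_general hα₁ hα₂.ne hβ ht.ne' θ φ
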